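/- Let m ≡ 2 (mod 4) with m ≥ 6, and let e be an integer with 2 ≤ e ≤ ⌊m/2⌋ and gcd(m,e) = 2. Then the supports of the codewords of Hamming weight 4 in the extended code C̄_E form a 2-(2^m, 4, 1) design, i.e., a Steiner system S(2,4,2^m): every 2-element subset of the 2^m coordinate positions is contained in the support of exactly one codeword of Hamming weight 4 of C̄_E. -/

import Mathlib

open Polynomial Finset

/-- The polynomial `c₀ + c₁x + ⋯ + c_{n−1}x^{n−1}` associated to a vector. -/
noncomputable def codePoly {n : ℕ} (c : Fin n → ZMod 2) : Polynomial (ZMod 2) :=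
  ∑ i : Fin n, Polynomial.C (c i) * Polynomial.X ^ (i : ℕ)

/-- The generator polynomial `g_E(x) = M_α(x) · M_{α^{1+2^e}}(x)`. -/
noncomputable def gE (m e : ℕ) (α : GaloisField 2 m) : Polynomial (ZMod 2) :=
  minpoly (ZMod 2) α * minpoly (ZMod 2) (α ^ (1 + 2 ^ e))

/-- The binary cyclic code `C_E` of length `2^m − 1` with generator polynomial `g_E`. -/
def CE (m e : ℕ) (α : GaloisField 2 m) : Set (Fin (2 ^ m - 1) → ZMod 2) :=
  {c | gE m e α ∣ codePoly c}

/-- The extended code `C̄_E ⊆ F_2^{2^m}`: the first `2^m − 1` coordinates form a codeword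
of `C_E` and all `2^m` coordinates sum to zero. -/
def CEbar (m e : ℕ) (α : GaloisField 2 m) : Set (Fin (2 ^ m) → ZMod 2) :=
  {c | (fun i : Fin (2 ^ m - 1) => c (Fin.castLE (Nat.sub_le _ _) i)) ∈ CE m e α ∧
       ∑ i, c i = 0}

/-!
Label the `2 ^ m` coordinates by the elements of `F = F_{2^m}`: position `i < 2 ^ m - 1` by `α ^ i`,
the last one by `0`. The two minimal polynomials are distinct: otherwise `x ↦ x ^ (1 + 2 ^ e)` would
be an automorphism, and its additivity would force `x ^ (2 ^ e) = x` on all of `F`. Hence a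
weight-`4` codeword of the extended code is a `4`-subset `S` of `F` with
`∑ s = ∑ s ^ (1 + 2 ^ e) = 0`. The first sum makes `S` an affine plane over `F_2`, say
`S = {x, y, z, x + y + z}`; writing `z = x + t (x + y)`, the second sum is
`(x + y) ^ (1 + 2 ^ e) (t ^ (2 ^ e) + t)`. It vanishes exactly when
`t ∈ F_{2^e} ∩ F_{2^m} = F_4 = {0, 1, ω, ω + 1}`, and `ω` and `ω + 1` give the same plane. The
block through `x` and `y` is thus the affine line over `F_4` that they span.
-/

section FrobeniusFixedPoints

theorem pow_expChar_pow_eq_self_iff_gcd {R : Type*} [CommSemiring R] (p : ℕ) [ExpChar R p]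
    {m e : ℕ} {t : R} (ht : t ^ p ^ m = t) : t ^ p ^ e = t ↔ t ^ p ^ Nat.gcd m e = t := by
  have isPeriodicPt_iff (k : ℕ) : Function.IsPeriodicPt (frobenius R p) k t ↔ t ^ p ^ k = t := by
    rw [Function.IsPeriodicPt, Function.IsFixedPt, iterate_frobenius]
  simp only [← isPeriodicPt_iff] at ht ⊢
  exact ⟨ht.gcd, fun h => h.trans_dvd (Nat.gcd_dvd_right m e)⟩

variable {F : Type*} [Field F]

theorem exists_sq_add_self_add_one_eq_zero [Finite F] (h : 3 ∣ Nat.card F - 1) :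
    ∃ ω : F, ω ^ 2 + ω + 1 = 0 := by
  rw [← Nat.card_units] at h
  obtain ⟨u, hu⟩ := exists_prime_orderOf_dvd_card' 3 h
  have hω : IsPrimitiveRoot (u : F) 3 := IsPrimitiveRoot.coe_units_iff.2 (hu ▸ .orderOf u)
  have hsum : 1 + (u : F) + (u : F) ^ 2 = 0 := by
    simpa [sum_range_succ] using hω.geom_sum_eq_zero (by norm_num)
  exact ⟨u, by linear_combination hsum⟩

theorem pow_four_eq_self_iff {R : Type*} [CommRing R] [IsDomain R] [CharP R 2] {ω : R}
    (hω : ω ^ 2 + ω + 1 = 0) {t : R} :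
    t ^ 4 = t ↔ t = 0 ∨ t = 1 ∨ t = ω ∨ t = ω + 1 := by
  have factorization : t ^ 4 - t = t * ((t - 1) * ((t - ω) * (t - (ω + 1)))) := by
    linear_combination (t - t ^ 2) * hω +
      (t ^ 3 - t + ω * (t ^ 3 - t ^ 2)) * CharTwo.two_eq_zero (R := R)
  rw [← sub_eq_zero, factorization]
  simp only [mul_eq_zero, sub_eq_zero]

theorem pow_two_pow_eq_self_iff_pow_four [Finite F] [CharP F 2] {m e : ℕ}
    (hcard : Nat.card F = 2 ^ m) (hgcd : Nat.gcd m e = 2) {t : F} :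
    t ^ 2 ^ e = t ↔ t ^ 4 = t := by
  have := Fintype.ofFinite F
  have ht : t ^ 2 ^ m = t := by rw [← hcard, Nat.card_eq_fintype_card, FiniteField.pow_card]
  rw [pow_expChar_pow_eq_self_iff_gcd 2 ht, hgcd]
  norm_num

end FrobeniusFixedPoints

section BinaryPlane

variable {F : Type*} [DecidableEq F]

/-- In characteristic two, the affine plane over `F_2` spanned by the points `x`, `y`, `z`. -/
def binaryPlane [Add F] (x y z : F) : Finset F := {x, y, z, x + y + z}

theorem binaryPlane_add_add [CommRing F] [CharP F 2] (x y z : F) :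
    binaryPlane x y (x + y + z) = binaryPlane x y z := by
  rw [binaryPlane, CharTwo.add_cancel_left, pair_comm, binaryPlane]

variable [CommRing F] [CharP F 2] {x y z : F}

theorem sum_binaryPlane {M : Type*} [AddCommMonoid M] (hxy : x ≠ y) (hxz : x ≠ z) (hyz : y ≠ z)
    (f : F → M) :
    ∑ s ∈ binaryPlane x y z, f s = f x + (f y + (f z + f (x + y + z))) := by
  have hx : x ≠ x + y + z := fun h => hyz (CharTwo.add_eq_zero.1 (by linear_combination -h))
  have hy : y ≠ x + y + z := fun h => hxz (CharTwo.add_eq_zero.1 (by linear_combination -h))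
  have hz : z ≠ x + y + z := fun h => hxy (CharTwo.add_eq_zero.1 (by linear_combination -h))
  rw [binaryPlane, sum_insert (by simp [*]), sum_insert (by simp [*]), sum_pair hz]

theorem card_binaryPlane (hxy : x ≠ y) (hxz : x ≠ z) (hyz : y ≠ z) : #(binaryPlane x y z) = 4 := by
  rw [card_eq_sum_ones, sum_binaryPlane hxy hxz hyz]
  norm_num

theorem exists_eq_binaryPlane_of_sum_eq_zero {S : Finset F} (hcard : #S = 4) (hxy : x ≠ y)
    (hx : x ∈ S) (hy : y ∈ S) (hsum : ∑ s ∈ S, s = 0) :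
    ∃ z, x ≠ z ∧ y ≠ z ∧ S = binaryPlane x y z := by
  have hy' : y ∈ S.erase x := mem_erase.2 ⟨hxy.symm, hy⟩
  obtain ⟨z, w, hzw, hrest⟩ : ∃ z w, z ≠ w ∧ (S.erase x).erase y = {z, w} := by
    rw [← card_eq_two, card_erase_of_mem hy', card_erase_of_mem hx, hcard]
  have hz : z ∈ (S.erase x).erase y := by simp [hrest]
  simp only [mem_erase] at hz
  have hw : w = x + y + z := by
    rw [← add_sum_erase S _ hx, ← add_sum_erase _ _ hy', hrest, sum_pair hzw] at hsum
    exact (CharTwo.add_eq_zero.1 (by linear_combination hsum)).symm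
  refine ⟨z, hz.2.1.symm, hz.1.symm, ?_⟩
  rw [binaryPlane, ← hw, ← hrest, insert_erase hy', insert_erase hx]

end BinaryPlane

section ZeroSumQuadruple

/-- The supports of the weight-`4` words of `C̄_E`, with each coordinate position replaced by the
field element labelling it: the `4`-subsets whose sum and `(1 + 2 ^ e)`-th power sum vanish. -/
structure IsZeroSumQuadruple {F : Type*} [Semiring F] (e : ℕ) (S : Finset F) : Prop where
  card_eq : #S = 4
  sum_eq_zero : ∑ s ∈ S, s = 0
  sum_pow_eq_zero : ∑ s ∈ S, s ^ (1 + 2 ^ e) = 0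

theorem binaryPlane_powerSum {R : Type*} [CommRing R] [CharP R 2] (e : ℕ) (x y t : R) :
    x ^ (1 + 2 ^ e) + (y ^ (1 + 2 ^ e) + ((x + t * (x + y)) ^ (1 + 2 ^ e) +
      (x + y + (x + t * (x + y))) ^ (1 + 2 ^ e))) = (x + y) ^ (1 + 2 ^ e) * (t ^ 2 ^ e + t) := by
  simp only [pow_add, pow_one, add_pow_char_pow, mul_pow]
  generalize x ^ 2 ^ e = x', y ^ 2 ^ e = y', t ^ 2 ^ e = t'
  linear_combination (3 * (x * x') + y * y' + y * x' + x * y' + x * t' * (x' + y') +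
    t * (x + y) * x' + t * t' * (x + y) * (x' + y')) * CharTwo.two_eq_zero (R := R)

variable {F : Type*} [Field F] [CharP F 2] {e : ℕ} {x y t : F}

theorem isZeroSumQuadruple_binaryPlane_iff [DecidableEq F] (hxy : x ≠ y) (ht0 : t ≠ 0)
    (ht1 : t ≠ 1) :
    IsZeroSumQuadruple e (binaryPlane x y (x + t * (x + y))) ↔ t ^ 2 ^ e = t := by
  have hu : x + y ≠ 0 := mt CharTwo.add_eq_zero.1 hxy
  have hx : x ≠ x + t * (x + y) := by simp [ht0, hu]
  have hy : y ≠ x + t * (x + y) := fun h =>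
    mul_ne_zero (sub_ne_zero.2 ht1) hu (by linear_combination -h - x * CharTwo.two_eq_zero (R := F))
  have hsum : ∑ s ∈ binaryPlane x y (x + t * (x + y)), s = 0 := by
    rw [sum_binaryPlane hxy hx hy, ← add_assoc, ← add_assoc, CharTwo.add_self_eq_zero]
  have hpow : ∑ s ∈ binaryPlane x y (x + t * (x + y)), s ^ (1 + 2 ^ e) = 0 ↔ t ^ 2 ^ e = t := by
    rw [sum_binaryPlane hxy hx hy, binaryPlane_powerSum,
      mul_eq_zero_iff_left (pow_ne_zero _ hu), CharTwo.add_eq_zero]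
  exact ⟨fun h => hpow.1 h.sum_pow_eq_zero, fun h => ⟨card_binaryPlane hxy hx hy, hsum, hpow.2 h⟩⟩

theorem IsZeroSumQuadruple.exists_eq_binaryPlane [DecidableEq F] {S : Finset F}
    (hS : IsZeroSumQuadruple e S) (hxy : x ≠ y) (hx : x ∈ S) (hy : y ∈ S) :
    ∃ t, t ≠ 0 ∧ t ≠ 1 ∧ t ^ 2 ^ e = t ∧ S = binaryPlane x y (x + t * (x + y)) := by
  obtain ⟨z, hxz, hyz, rfl⟩ :=
    exists_eq_binaryPlane_of_sum_eq_zero hS.card_eq hxy hx hy hS.sum_eq_zero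
  obtain ⟨t, rfl⟩ : ∃ t, z = x + t * (x + y) :=
    ⟨(x + z) / (x + y), by
      rw [div_mul_cancel₀ _ (mt CharTwo.add_eq_zero.1 hxy), CharTwo.add_cancel_left]⟩
  have ht0 : t ≠ 0 := by rintro rfl; simp at hxz
  have ht1 : t ≠ 1 := by rintro rfl; simp [CharTwo.add_cancel_left] at hyz
  exact ⟨t, ht0, ht1, (isZeroSumQuadruple_binaryPlane_iff hxy ht0 ht1).1 hS, rfl⟩

theorem existsUnique_isZeroSumQuadruple [Finite F] {m : ℕ} (hcard : Nat.card F = 2 ^ m)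
    (hgcd : Nat.gcd m e = 2) (hxy : x ≠ y) :
    ∃! S : Finset F, IsZeroSumQuadruple e S ∧ x ∈ S ∧ y ∈ S := by
  classical
  have three_dvd : 3 ∣ Nat.card F - 1 := by
    obtain ⟨k, rfl⟩ : 2 ∣ m := hgcd ▸ Nat.gcd_dvd_left m e
    simpa [hcard, pow_mul] using Nat.sub_dvd_pow_sub_pow 4 1 k
  obtain ⟨ω, hω⟩ := exists_sq_add_self_add_one_eq_zero three_dvd
  have fixed_iff (t : F) : t ^ 2 ^ e = t ↔ t = 0 ∨ t = 1 ∨ t = ω ∨ t = ω + 1 :=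
    (pow_two_pow_eq_self_iff_pow_four hcard hgcd).trans (pow_four_eq_self_iff hω)
  have hω0 : ω ≠ 0 := by rintro rfl; simp at hω
  have hω1 : ω ≠ 1 := by rintro rfl; simp [CharTwo.add_self_eq_zero] at hω
  refine ⟨binaryPlane x y (x + ω * (x + y)), ⟨?_, by simp [binaryPlane], by simp [binaryPlane]⟩, ?_⟩
  · exact (isZeroSumQuadruple_binaryPlane_iff hxy hω0 hω1).2 ((fixed_iff ω).2 (by simp))
  · rintro S ⟨hS, hx, hy⟩
    obtain ⟨t, ht0, ht1, ht, rfl⟩ := hS.exists_eq_binaryPlane hxy hx hy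
    obtain rfl | rfl : t = ω ∨ t = ω + 1 := by simpa [ht0, ht1] using (fixed_iff t).1 ht
    · rfl
    · rw [← binaryPlane_add_add x y (x + ω * (x + y))]
      congr 1
      ring

end ZeroSumQuadruple

section Locator

variable {F : Type*}

/-- The field element labelling a coordinate position of the extended code of length `n`:
`α ^ i` at position `i < n - 1`, and `0` at the last, parity-check, position. -/
def locator [MonoidWithZero F] {n : ℕ} (α : F) (i : Fin n) : F :=
  if (i : ℕ) < n - 1 then α ^ (i : ℕ) else 0

variable {n : ℕ} {α : F}

theorem locator_injective [MonoidWithZero F] [Nontrivial F] [NoZeroDivisors F]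
    (hα : orderOf α = n - 1) : Function.Injective (locator α : Fin n → F) := by
  intro i j h
  have hα0 (hi : (i : ℕ) < n - 1 ∨ (j : ℕ) < n - 1) : α ≠ 0 := by
    rintro rfl
    rw [orderOf_zero] at hα
    omega
  simp only [locator] at h
  ext
  split_ifs at h with hi hj hj
  · exact pow_injOn_Iio_orderOf (hα ▸ hi) (hα ▸ hj) h
  · exact absurd h (pow_ne_zero _ (hα0 (.inl hi)))
  · exact absurd h.symm (pow_ne_zero _ (hα0 (.inr hj)))
  · omega

theorem locator_bijective [MonoidWithZero F] [Nontrivial F] [NoZeroDivisors F] [Finite F]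
    (hcard : Nat.card F = n) (hα : orderOf α = n - 1) :
    Function.Bijective (locator α : Fin n → F) :=
  (Nat.bijective_iff_injective_and_card _).2 ⟨locator_injective hα, by simp [hcard]⟩

theorem sum_smul_locator_pow [CommSemiring F] [Algebra (ZMod 2) F] (α : F)
    (c : Fin n → ZMod 2) {k : ℕ} (hk : k ≠ 0) :
    ∑ i, c i • locator α i ^ k =
      aeval (α ^ k) (codePoly fun i : Fin (n - 1) => c (Fin.castLE (Nat.sub_le _ _) i)) := by
  cases n with
  | zero => simp [codePoly]
  | succ n =>
    have locator_castSucc (i : Fin n) : locator α i.castSucc = α ^ (i : ℕ) := by simp [locator]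
    have locator_last : locator α (Fin.last n) = 0 := by simp [locator]
    simp only [Fin.sum_univ_castSucc, locator_castSucc, locator_last, zero_pow hk, codePoly,
      map_sum, map_mul, aeval_C, map_pow, aeval_X, Algebra.smul_def, mul_zero, add_zero,
      pow_right_comm α k]
    rfl

end Locator

theorem pow_two_pow_eq_self_of_map_eq_pow {R G : Type*} [CommRing R] [CharP R 2] [FunLike G R R]
    [RingHomClass G R R] {e : ℕ} (σ : G) (hσ : ∀ x, σ x = x ^ (1 + 2 ^ e)) (x : R) :
    x ^ 2 ^ e = x := by
  have h : (x + 1) ^ (1 + 2 ^ e) = x ^ (1 + 2 ^ e) + 1 := by rw [← hσ, ← hσ, map_add, map_one]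
  simp only [pow_add, pow_one, add_pow_char_pow, one_pow] at h
  exact CharTwo.add_eq_zero.1 (by linear_combination h)

theorem map_eq_pow_of_orderOf_eq {F G : Type*} [MonoidWithZero F] [Nontrivial F]
    [NoZeroDivisors F] [Finite F] [FunLike G F F] [MonoidWithZeroHomClass G F F] {α : F}
    (hα : orderOf α = Nat.card F - 1) {σ : G} {k : ℕ} (hk : k ≠ 0) (hσ : σ α = α ^ k) (x : F) :
    σ x = x ^ k := by
  obtain ⟨i, rfl⟩ := (locator_bijective rfl hα).surjective x
  unfold locator
  split_ifs
  · rw [map_pow, hσ, pow_right_comm]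
  · rw [map_zero, zero_pow hk]

theorem minpoly_pow_ne_minpoly {F : Type*} [Field F] [Finite F] [CharP F 2] [Algebra (ZMod 2) F]
    {m e : ℕ} {α : F} (hcard : Nat.card F = 2 ^ m) (hm : 2 < m) (hgcd : Nat.gcd m e = 2)
    (hα : orderOf α = 2 ^ m - 1) :
    minpoly (ZMod 2) (α ^ (1 + 2 ^ e)) ≠ minpoly (ZMod 2) α := by
  intro heq
  obtain ⟨σ, hσ⟩ := (isConjRoot_iff_exists_algEquiv (K := ZMod 2)).1 heq
  have hpow := map_eq_pow_of_orderOf_eq (hcard ▸ hα) (by positivity) hσ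
  have hfour : α ^ 4 = α := (pow_two_pow_eq_self_iff_pow_four hcard hgcd).1
    (pow_two_pow_eq_self_of_map_eq_pow σ hpow α)
  have hlarge : 2 ^ 3 ≤ 2 ^ m := Nat.pow_le_pow_right two_pos hm
  have lt_orderOf {k : ℕ} (hk : k ≤ 4) : k < orderOf α := by omega
  have four_eq_one : 4 = 1 :=
    pow_injOn_Iio_orderOf (lt_orderOf le_rfl) (lt_orderOf (by norm_num)) (by simpa using hfour)
  omega

theorem isCoprime_minpoly_of_ne {K L : Type*} [Field K] [Field L] [Algebra K L] {a b : L}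
    (ha : IsIntegral K a) (hb : IsIntegral K b) (h : minpoly K b ≠ minpoly K a) :
    IsCoprime (minpoly K a) (minpoly K b) := by
  refine (minpoly.irreducible ha).coprime_iff_not_dvd.2 fun hdvd => h ?_
  exact minpoly.eq_of_irreducible_of_monic (minpoly.irreducible hb)
    (aeval_eq_zero_of_dvd_aeval_eq_zero hdvd (minpoly.aeval K a)) (minpoly.monic hb)

section BinaryWords

variable {ι : Type*} [Fintype ι]

theorem sum_zmod_two_smul {M : Type*} [AddCommMonoid M] [Module (ZMod 2) M] (c : ι → ZMod 2)
    (f : ι → M) : ∑ i, c i • f i = ∑ i with c i ≠ 0, f i := by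
  rw [sum_filter]
  refine sum_congr rfl fun i _ => ?_
  split_ifs with h
  · have hc : c i = 1 := Fin.eq_one_of_ne_zero (c i) h
    rw [hc, one_smul]
  · rw [not_not.1 h, zero_smul]

theorem sum_eq_hammingNorm (c : ι → ZMod 2) : ∑ i, c i = (hammingNorm c : ZMod 2) := by
  simpa [hammingNorm] using sum_zmod_two_smul c (1 : ι → ZMod 2)

variable [DecidableEq ι] {F : Type*}

/-- A binary word corresponds to its support; any set of positions is a support. -/
def binarySupportEquiv : (ι → ZMod 2) ≃ Finset ι where
  toFun c := {i | c i ≠ 0}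
  invFun s i := if i ∈ s then 1 else 0
  left_inv c := by
    funext i
    by_cases h : c i = 0
    · simp [h]
    · have hc : c i = 1 := Fin.eq_one_of_ne_zero (c i) h
      simp [hc]
  right_inv s := by simp

/-- Sends a binary word to its support, read in `F` through the labelling `L` of positions. -/
def labelledSupportEquiv (L : ι ≃ F) : (ι → ZMod 2) ≃ Finset F :=
  binarySupportEquiv.trans L.finsetCongr

theorem labelledSupportEquiv_apply (L : ι ≃ F) (c : ι → ZMod 2) :
    labelledSupportEquiv L c = ({i | c i ≠ 0} : Finset ι).map L.toEmbedding := rfl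

theorem apply_mem_labelledSupportEquiv (L : ι ≃ F) {c : ι → ZMod 2} {i : ι} :
    L i ∈ labelledSupportEquiv L c ↔ c i ≠ 0 := by
  simp [labelledSupportEquiv_apply]

theorem card_labelledSupportEquiv (L : ι ≃ F) (c : ι → ZMod 2) :
    #(labelledSupportEquiv L c) = hammingNorm c := by
  rw [labelledSupportEquiv_apply, card_map, hammingNorm]

theorem sum_labelledSupportEquiv {M : Type*} [AddCommMonoid M] [Module (ZMod 2) M] (L : ι ≃ F)
    (c : ι → ZMod 2) (f : F → M) :
    ∑ s ∈ labelledSupportEquiv L c, f s = ∑ i, c i • f (L i) := by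
  rw [labelledSupportEquiv_apply, sum_map, sum_zmod_two_smul]
  rfl

end BinaryWords

section ExtendedCode

variable {m e : ℕ} {α : GaloisField 2 m}

theorem mem_CEbar_iff
    (hcop : IsCoprime (minpoly (ZMod 2) α) (minpoly (ZMod 2) (α ^ (1 + 2 ^ e))))
    {c : Fin (2 ^ m) → ZMod 2} :
    c ∈ CEbar m e α ↔ (∑ i, c i • locator α i = 0 ∧ ∑ i, c i • locator α i ^ (1 + 2 ^ e) = 0) ∧
      ∑ i, c i = 0 := by
  have hlinear := sum_smul_locator_pow α c one_ne_zero
  simp only [pow_one] at hlinear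
  rw [hlinear, sum_smul_locator_pow α c (by positivity), ← minpoly.dvd_iff, ← minpoly.dvd_iff]
  exact and_congr_left' ⟨fun h => ⟨dvd_of_mul_right_dvd h, dvd_of_mul_left_dvd h⟩,
    fun h => hcop.mul_dvd h.1 h.2⟩

theorem mem_CEbar_and_hammingNorm_eq_four_iff
    (hcop : IsCoprime (minpoly (ZMod 2) α) (minpoly (ZMod 2) (α ^ (1 + 2 ^ e))))
    (L : Fin (2 ^ m) ≃ GaloisField 2 m) (hL : ∀ i, L i = locator α i) (c : Fin (2 ^ m) → ZMod 2) :
    c ∈ CEbar m e α ∧ hammingNorm c = 4 ↔ IsZeroSumQuadruple e (labelledSupportEquiv L c) := by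
  have parity (h : hammingNorm c = 4) : ∑ i, c i = 0 := by
    rw [sum_eq_hammingNorm, h]
    rfl
  rw [mem_CEbar_iff hcop]
  simp only [← hL, ← card_labelledSupportEquiv L] at parity ⊢
  rw [← sum_labelledSupportEquiv L c fun s => s,
    ← sum_labelledSupportEquiv L c fun s => s ^ (1 + 2 ^ e)]
  exact ⟨fun ⟨⟨⟨hsum, hpow⟩, _⟩, hcard⟩ => ⟨hcard, hsum, hpow⟩,
    fun ⟨hcard, hsum, hpow⟩ => ⟨⟨⟨hsum, hpow⟩, parity hcard⟩, hcard⟩⟩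

end ExtendedCode

theorem steiner_system_S_2_4_2m_of_mod_four_eq_two_general (m e : ℕ) (hm : 2 < m)
    (hgcd : Nat.gcd m e = 2) (α : GaloisField 2 m) (hα : orderOf α = 2 ^ m - 1) :
    ∀ T : Finset (Fin (2 ^ m)), T.card = 2 →
      {c : Fin (2 ^ m) → ZMod 2 |
        c ∈ CEbar m e α ∧ hammingNorm c = 4 ∧ ∀ i ∈ T, c i ≠ 0}.ncard = 1 := by
  intro T hT
  obtain ⟨a, b, hab, rfl⟩ := card_eq_two.1 hT
  have hcard : Nat.card (GaloisField 2 m) = 2 ^ m := GaloisField.card 2 m (by omega)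
  have hcop := isCoprime_minpoly_of_ne (.of_finite (ZMod 2) α) (.of_finite (ZMod 2) _)
    (minpoly_pow_ne_minpoly hcard hm hgcd hα)
  let L := Equiv.ofBijective _ (locator_bijective hcard hα)
  obtain ⟨c, hc, hunique⟩ := (labelledSupportEquiv L).bijective.existsUnique_iff.1
    (existsUnique_isZeroSumQuadruple hcard hgcd (L.injective.ne hab))
  simp only [← mem_CEbar_and_hammingNorm_eq_four_iff hcop L (fun _ => rfl),
    apply_mem_labelledSupportEquiv, and_assoc] at hc hunique
  simp only [forall_mem_insert, mem_singleton, forall_eq]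
  exact Set.ncard_eq_one.2 ⟨c, Set.eq_singleton_iff_unique_mem.2 ⟨hc, hunique⟩⟩

/-- For `m ≡ 2 (mod 4)` with `m ≥ 6`, and `2 ≤ e ≤ ⌊m/2⌋` with
`gcd(m,e) = 2`, the supports of the weight-4 codewords of `C̄_E` form a Steiner system
`S(2, 4, 2^m)`: every 2-element subset of the `2^m` coordinate positions is contained in
the support of exactly one codeword of Hamming weight 4. -/
theorem steiner_system_S_2_4_2m_of_mod_four_eq_two
    (m e : ℕ) (hm4 : m % 4 = 2) (hm : 6 ≤ m)
    (he2 : 2 ≤ e) (heM : 2 * e ≤ m) (hgcd : Nat.gcd m e = 2)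
    (α : GaloisField 2 m) (hα : orderOf α = 2 ^ m - 1) :
    ∀ T : Finset (Fin (2 ^ m)), T.card = 2 →
      {c : Fin (2 ^ m) → ZMod 2 |
        c ∈ CEbar m e α ∧ hammingNorm c = 4 ∧ ∀ i ∈ T, c i ≠ 0}.ncard = 1 :=
  steiner_system_S_2_4_2m_of_mod_four_eq_two_general m e (by omega) hgcd α hα
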